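/- Let d ≥ 3 be odd, n = (d²+1)/2, and in R = 𝔽₂[x]/(xⁿ−1) set a = 1+x and b = (1+x)·P_d(x). Then for all j, u, v ∈ R: if (u + j·(1+x), v) ∈ C₁(a,b) \ C₂(a,b), then wt(j) + wt(u) + wt(v) ≥ d. (Hence under the RL syndrome-extraction pattern, whose check-qubit faults propagate to data errors of the form (j·(1+x), 0), the effective distance of the [[d²+1, 2, d]] GB code equals its minimum distance d.) -/

import Mathlib

open Polynomial

noncomputable section

/-- `R2 n` is the ring `𝔽₂[x]/(xⁿ − 1)`. -/
abbrev R2 (n : ℕ) : Type := AdjoinRoot (X ^ n - 1 : (ZMod 2)[X])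

/-- The image of `x` in `𝔽₂[x]/(xⁿ − 1)`. -/
def xR (n : ℕ) : R2 n := AdjoinRoot.root _

/-- The quotient map `𝔽₂[x] → 𝔽₂[x]/(xⁿ − 1)`. -/
def mkR (n : ℕ) : (ZMod 2)[X] →+* R2 n := AdjoinRoot.mk _

lemma xR_pow_n (n : ℕ) : xR n ^ n = 1 := by
  have h : (AdjoinRoot.mk (X ^ n - 1 : (ZMod 2)[X])) (X ^ n - 1) = 0 := AdjoinRoot.mk_self
  rw [map_sub, map_pow, AdjoinRoot.mk_X, map_one, sub_eq_zero] at h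
  exact h

/-- The unique representative of degree `< n` of an element of `𝔽₂[x]/(xⁿ − 1)` (junk if `n = 0`). -/
def repP {n : ℕ} (u : R2 n) : (ZMod 2)[X] :=
  if h : n = 0 then 0
  else AdjoinRoot.modByMonicHom (by simpa using monic_X_pow_sub_C (1 : ZMod 2) h) u

/-- The Hamming weight of an element of `𝔽₂[x]/(xⁿ − 1)`: the number of nonzero coefficients
of its degree-`< n` representative. -/
def wt {n : ℕ} (u : R2 n) : ℕ := (repP u).support.card

/-- Coefficient of the degree-`< n` representative, indexed by `ℤ/n`. -/
def coeffZ {n : ℕ} (u : R2 n) (i : ZMod n) : ZMod 2 := (repP u).coeff i.val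

/-- The X-stabilizer space `C₂(a,b) = {(r·a, r·b) : r ∈ R}` of the GB code of `(a,b)`. -/
def C2set (n : ℕ) (a b : R2 n) : Set (R2 n × R2 n) := {p | ∃ r : R2 n, p = (r * a, r * b)}

/-- The space `C₁(a,b) = {(u,v) : u·b + v·a = 0}` of the GB code of `(a,b)`. -/
def C1set (n : ℕ) (a b : R2 n) : Set (R2 n × R2 n) := {p | p.1 * b + p.2 * a = 0}

/-- The (X-side) minimum distance of the GB code of `(a,b)`. -/
def dGB (n : ℕ) (a b : R2 n) : ℕ :=
  sInf {k | ∃ p ∈ C1set n a b \ C2set n a b, wt p.1 + wt p.2 = k}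

/-- `P_m(x) = 1 + x + ⋯ + x^{m−1}` as a polynomial over `𝔽₂`. -/
def PmP (m : ℕ) : (ZMod 2)[X] := ∑ i ∈ Finset.range m, X ^ i

/-- `P_m(x) = 1 + x + ⋯ + x^{m−1}` as an element of `𝔽₂[x]/(xⁿ − 1)`. -/
def PmR (n m : ℕ) : R2 n := ∑ i ∈ Finset.range m, xR n ^ i

/-- The ring endomorphism of `𝔽₂[x]/(xⁿ − 1)` induced by `x ↦ x^d`. -/
def substHom (n d : ℕ) : R2 n →+* R2 n :=
  AdjoinRoot.lift (algebraMap (ZMod 2) (R2 n)) (xR n ^ d) (by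
    simp only [eval₂_sub, eval₂_X_pow, eval₂_one]
    rw [← pow_mul, mul_comm d n, pow_mul, xR_pow_n, one_pow, sub_self])

/-- The Euclidean inner product on `𝔽₂²ⁿ`, in terms of pairs `(u₁, u₂)` of elements of
`𝔽₂[x]/(xⁿ − 1)` (representing the concatenated binary vector `(u₁ | u₂)`). -/
def eucInner (n : ℕ) (p q : R2 n × R2 n) : ZMod 2 :=
  ∑ i ∈ Finset.range n,
    ((repP p.1).coeff i * (repP q.1).coeff i + (repP p.2).coeff i * (repP q.2).coeff i)

/-- The symplectic inner product of `u₁ + w·u₂` and `v₁ + w·v₂`, i.e.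
`Σᵢ (u₁ᵢ·v₂ᵢ + u₂ᵢ·v₁ᵢ)`, in terms of the pairs `(u₁,u₂)`, `(v₁,v₂)`. -/
def sympInner (n : ℕ) (p q : R2 n × R2 n) : ZMod 2 :=
  ∑ i ∈ Finset.range n,
    ((repP p.1).coeff i * (repP q.2).coeff i + (repP p.2).coeff i * (repP q.1).coeff i)

/-- Euclidean dual of a set of (pairs representing) binary vectors of length `2n`. -/
def eucDual (n : ℕ) (S : Set (R2 n × R2 n)) : Set (R2 n × R2 n) :=
  {p | ∀ q ∈ S, eucInner n q p = 0}

/-- Symplectic dual of a set of (pairs representing) vectors of `𝔽₄ⁿ`. -/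
def sympDual (n : ℕ) (S : Set (R2 n × R2 n)) : Set (R2 n × R2 n) :=
  {p | ∀ q ∈ S, sympInner n q p = 0}

/-- Number of nonzero `𝔽₄`-coordinates of `u₁ + w·u₂`, in terms of the pair `(u₁,u₂)`. -/
def wt4 (n : ℕ) (p : R2 n × R2 n) : ℕ := ((repP p.1).support ∪ (repP p.2).support).card

/-- The `2n` binary coordinates of a pair `(u₁,u₂)`. -/
def coords {n : ℕ} (p : R2 n × R2 n) : (Fin n ⊕ Fin n) → ZMod 2 :=
  Sum.elim (fun i => (repP p.1).coeff i) (fun i => (repP p.2).coeff i)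

/-- Vertex set of the Tanner graph: check vertices `x_t` (left) and data vertices
`q_s`, `q'_s` (right). -/
def TV (n : ℕ) : Type := (ZMod n) ⊕ ((ZMod n) ⊕ (ZMod n))

/-- `trel a b v w` holds iff `v` is a check vertex `x_t`, `w` is a data vertex, and they are
connected: `x_t ~ q_s` iff `a_{s−t} = 1`, and `x_t ~ q'_s` iff `b_{s−t} = 1`. -/
def trel {n : ℕ} (a b : R2 n) (v w : TV n) : Prop :=
  ∃ t s : ZMod n, v = Sum.inl t ∧
    ((w = Sum.inr (Sum.inl s) ∧ coeffZ a (s - t) = 1) ∨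
     (w = Sum.inr (Sum.inr s) ∧ coeffZ b (s - t) = 1))

/-- The Tanner graph `T(a,b)` of the GB code of `(a,b)`. -/
def tanner (n : ℕ) (a b : R2 n) : SimpleGraph (TV n) where
  Adj v w := trel a b v w ∨ trel a b w v
  symm := ⟨fun v w h => Or.symm h⟩
  loopless := by
    constructor
    rintro v (⟨t, s, hv, hw⟩ | ⟨t, s, hv, hw⟩) <;>
      rcases hw with ⟨hw, -⟩ | ⟨hw, -⟩ <;> (subst hv; simp at hw)

end

noncomputable section

/-!
Let `J = 1 + x + ⋯ + x^{n-1}`, whose `𝔽₂`-multiples form the annihilator of `1 + x`. A pair `(p, q)`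
lies in `C₁` iff `q + p·P_d = c·J` for some `c ∈ 𝔽₂`, and it then lies in `C₂` iff `c = 0` and
`p(1) = 0`. Write `p = u + j·(1+x)` and `q = v`. Since `P_{dm}` is a sum of `m` shifts of `P_d`,
the sum of the corresponding shifts of `q` and a suitable shift of `P_l·p` is a multiple of `J` as
soon as `d·m ± l = k·n`, with coefficient `m·c + k·p(1)`. When this coefficient is `1`, comparing
weights gives `n ≤ m·wt v + l·wt u + 2·wt j`: multiplication by `P_l` telescopes `j·(1+x)` to just
two shifts of `j`. With `d = 2f + 1`, the choices `(m, l) = (f, f+1)` and `(f+1, f)` are available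
and suffice for `c = 0`; for `c = 1` one of them is available, and it is combined with `(d, 1)` or
`(1, d)` respectively.
-/

section Weight

variable {n : ℕ}

lemma wt_add_le (u v : R2 n) : wt (u + v) ≤ wt u + wt v := by
  have repP_add : repP (u + v) = repP u + repP v := by
    unfold repP
    split_ifs <;> simp
  rw [wt, repP_add]
  exact (Finset.card_le_card support_add).trans (Finset.card_union_le _ _)

lemma wt_sum_le {ι : Type*} (s : Finset ι) (f : ι → R2 n) :
    wt (∑ i ∈ s, f i) ≤ ∑ i ∈ s, wt (f i) := by
  have wt_zero : wt (0 : R2 n) = 0 := by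
    unfold wt repP
    split_ifs <;> simp
  exact Finset.le_sum_of_subadditive wt wt_zero.le wt_add_le s f

lemma mkR_X : mkR n X = xR n := AdjoinRoot.mk_X

lemma mkR_surjective : Function.Surjective (mkR n) := AdjoinRoot.mk_surjective

variable [NeZero n]

variable (n) in
lemma monic_X_pow_sub_one : (X ^ n - 1 : (ZMod 2)[X]).Monic := by
  simpa using monic_X_pow_sub_C (1 : ZMod 2) (NeZero.ne n)

lemma mkR_repP (u : R2 n) : mkR n (repP u) = u := by
  rw [repP, dif_neg (NeZero.ne n)]
  exact AdjoinRoot.mk_leftInverse (monic_X_pow_sub_one n) u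

lemma repP_mkR_of_degree_lt {p : (ZMod 2)[X]} (hp : p.degree < n) : repP (mkR n p) = p := by
  have degree_modulus : (X ^ n - 1 : (ZMod 2)[X]).degree = n := by
    simpa using degree_X_pow_sub_C (NeZero.pos n) (1 : ZMod 2)
  rw [repP, dif_neg (NeZero.ne n)]
  refine (AdjoinRoot.modByMonicHom_mk (monic_X_pow_sub_one n) p).trans ?_
  rwa [modByMonic_eq_self_iff (monic_X_pow_sub_one n), degree_modulus]

lemma wt_mkR_monomial_le_one (k : ℕ) (c : ZMod 2) : wt (mkR n (monomial k c)) ≤ 1 := by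
  have mod_exponent : mkR n (monomial k c) = mkR n (monomial (k % n) c) := by
    simp only [← C_mul_X_pow_eq_monomial, map_mul, map_pow, mkR_X]
    rw [pow_eq_pow_mod k (xR_pow_n n)]
  have degree_lt : (monomial (k % n) c).degree < n :=
    (degree_monomial_le _ _).trans_lt (by exact_mod_cast Nat.mod_lt k (NeZero.pos n))
  rw [wt, mod_exponent, repP_mkR_of_degree_lt degree_lt]
  exact card_support_le_one_iff_monomial.2 ⟨_, _, rfl⟩

lemma wt_mkR_le (p : (ZMod 2)[X]) : wt (mkR n p) ≤ p.support.card :=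
  calc wt (mkR n p) = wt (∑ i ∈ p.support, mkR n (monomial i (p.coeff i))) := by
        rw [← map_sum, ← p.as_sum_support]
    _ ≤ ∑ i ∈ p.support, wt (mkR n (monomial i (p.coeff i))) := wt_sum_le _ _
    _ ≤ ∑ _i ∈ p.support, 1 := Finset.sum_le_sum fun i _ ↦ wt_mkR_monomial_le_one i _
    _ = p.support.card := (Finset.card_eq_sum_ones _).symm

lemma wt_mul_le (u v : R2 n) : wt (u * v) ≤ wt u * wt v :=
  calc wt (u * v) = wt (mkR n (repP u * repP v)) := by rw [map_mul, mkR_repP, mkR_repP]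
    _ ≤ (repP u * repP v).support.card := wt_mkR_le _
    _ ≤ wt u * wt v := card_support_mul_le

lemma wt_mul_le_of_wt_le {m : ℕ} {u : R2 n} (hu : wt u ≤ m) (v : R2 n) :
    wt (u * v) ≤ m * wt v :=
  (wt_mul_le u v).trans (Nat.mul_le_mul_right _ hu)

lemma wt_xR_pow_le_one (k : ℕ) : wt (xR n ^ k) ≤ 1 := by
  simpa only [monomial_one_right_eq_X_pow, map_pow, mkR_X]
    using wt_mkR_monomial_le_one (n := n) k 1

lemma wt_sum_xR_pow_le {ι : Type*} (s : Finset ι) (g : ι → ℕ) :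
    wt (∑ i ∈ s, xR n ^ g i) ≤ s.card :=
  calc wt (∑ i ∈ s, xR n ^ g i) ≤ ∑ i ∈ s, wt (xR n ^ g i) := wt_sum_le _ _
    _ ≤ ∑ _i ∈ s, 1 := Finset.sum_le_sum fun i _ ↦ wt_xR_pow_le_one (g i)
    _ = s.card := (Finset.card_eq_sum_ones _).symm

lemma wt_PmR_self : wt (PmR n n) = n := by
  have PmR_eq_mkR : PmR n n = mkR n (PmP n) := by simp [PmR, PmP, mkR_X]
  have coeff_PmP (i : ℕ) : (PmP n).coeff i = if i < n then 1 else 0 := by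
    simp [PmP, coeff_X_pow]
  have degree_PmP_lt : (PmP n).degree < n := by
    rw [degree_lt_iff_coeff_zero]
    intro i hi
    rw [coeff_PmP, if_neg hi.not_gt]
  have support_PmP : (PmP n).support = Finset.range n := by
    ext i
    simp [coeff_PmP]
  rw [wt, PmR_eq_mkR, repP_mkR_of_degree_lt degree_PmP_lt, support_PmP, Finset.card_range]

end Weight

section Augmentation

/-- The augmentation map `p ↦ p(1)` of `𝔽₂[x]/(xⁿ − 1)`, which sends an element to the parity of
its weight. -/
def augmentation (n : ℕ) : R2 n →ₐ[ZMod 2] ZMod 2 :=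
  AdjoinRoot.liftAlgHom _ (AlgHom.id (ZMod 2) (ZMod 2)) 1 (by simp)

variable {n : ℕ}

lemma augmentation_mkR (p : (ZMod 2)[X]) : augmentation n (mkR n p) = p.eval 1 :=
  AdjoinRoot.lift_mk (by simp) p

lemma augmentation_xR : augmentation n (xR n) = 1 := by
  rw [← mkR_X, augmentation_mkR, eval_X]

lemma mkR_X_sub_one : mkR n (X - 1) = 1 + xR n := by
  rw [map_sub, mkR_X, map_one, ZModModule.sub_eq_add, add_comm]

lemma augmentation_eq_zero_iff {u : R2 n} : augmentation n u = 0 ↔ 1 + xR n ∣ u := by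
  constructor
  · obtain ⟨p, rfl⟩ := mkR_surjective u
    rw [augmentation_mkR, ← mkR_X_sub_one]
    exact fun isRoot ↦ map_dvd _ (dvd_iff_isRoot.2 isRoot)
  · rintro ⟨r, rfl⟩
    rw [map_mul, map_add, map_one, augmentation_xR, ZModModule.add_self, zero_mul]

end Augmentation

section AllOnes

variable {n : ℕ}

lemma one_add_xR_mul_PmR (m : ℕ) : (1 + xR n) * PmR n m = 1 + xR n ^ m := by
  simpa only [PmR, ZModModule.sub_eq_add, add_comm] using mul_geom_sum (xR n) m

lemma one_add_xR_mul_PmR_self : (1 + xR n) * PmR n n = 0 := by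
  rw [one_add_xR_mul_PmR, xR_pow_n, ZModModule.add_self]

lemma mul_PmR_self (u : R2 n) : u * PmR n n = augmentation n u • PmR n n := by
  have augmentation_sub :
      augmentation n (u - algebraMap (ZMod 2) (R2 n) (augmentation n u)) = 0 := by
    rw [map_sub, AlgHom.commutes, Algebra.algebraMap_self_apply, sub_self]
  obtain ⟨r, hr⟩ := augmentation_eq_zero_iff.1 augmentation_sub
  rw [Algebra.smul_def]
  linear_combination PmR n n * hr + r * one_add_xR_mul_PmR_self (n := n)

lemma one_add_xR_mul_eq_zero_iff {w : R2 n} :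
    (1 + xR n) * w = 0 ↔ ∃ c : ZMod 2, w = c • PmR n n := by
  constructor
  · obtain ⟨p, rfl⟩ := mkR_surjective w
    intro hw
    rw [← mkR_X_sub_one, ← map_mul] at hw
    have modulus_dvd : (X ^ n - 1 : (ZMod 2)[X]) ∣ (X - 1) * p := AdjoinRoot.mk_eq_zero.1 hw
    have X_sub_one_ne_zero : (X - 1 : (ZMod 2)[X]) ≠ 0 := X_sub_C_ne_zero 1
    rw [← mul_geom_sum, mul_dvd_mul_iff_left X_sub_one_ne_zero] at modulus_dvd
    obtain ⟨q, rfl⟩ := modulus_dvd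
    have mkR_geom_sum : mkR n (∑ i ∈ Finset.range n, X ^ i) = PmR n n := by simp [PmR, mkR_X]
    exact ⟨_, by rw [map_mul, mkR_geom_sum, mul_comm, mul_PmR_self]⟩
  · rintro ⟨c, rfl⟩
    rw [mul_smul_comm, one_add_xR_mul_PmR_self, smul_zero]

lemma PmR_zero : PmR n 0 = 0 := Finset.sum_range_zero _

lemma PmR_add (k m : ℕ) : PmR n (k + m) = PmR n k + xR n ^ k * PmR n m := by
  simp only [PmR, Finset.sum_range_add, Finset.mul_sum, pow_add]

lemma PmR_mul (d m : ℕ) :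
    PmR n (d * m) = PmR n d * ∑ k ∈ Finset.range m, xR n ^ (d * k) := by
  induction m with
  | zero => simp [PmR_zero]
  | succ m ih =>
    rw [Nat.mul_succ, PmR_add, ih, Finset.sum_range_succ]
    ring

lemma PmR_mul_period_add (k l : ℕ) :
    PmR n (k * n + l) = (k : ZMod 2) • PmR n n + PmR n l := by
  induction k with
  | zero => simp
  | succ k ih =>
    rw [show (k + 1) * n + l = n + (k * n + l) by ring, PmR_add, xR_pow_n, ih, Nat.cast_succ,
      add_smul, one_smul]
    ring

lemma exists_PmR_add_xR_pow_mul_PmR {k l m : ℕ} (h : m + l = k * n ∨ m = k * n + l) :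
    ∃ s, PmR n m + xR n ^ s * PmR n l = (k : ZMod 2) • PmR n n := by
  rcases h with h | rfl
  · exact ⟨m, by rw [← PmR_add, h, ← add_zero (k * n), PmR_mul_period_add, PmR_zero, add_zero]⟩
  · exact ⟨0, by rw [PmR_mul_period_add, pow_zero, one_mul, add_assoc, ZModModule.add_self,
      add_zero]⟩

end AllOnes

section Codes

variable {n d : ℕ} {p q : R2 n}

lemma mem_C1set_iff : (p, q) ∈ C1set n (1 + xR n) ((1 + xR n) * PmR n d) ↔
    ∃ c : ZMod 2, q + p * PmR n d = c • PmR n n := by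
  rw [← one_add_xR_mul_eq_zero_iff]
  change p * ((1 + xR n) * PmR n d) + q * (1 + xR n) = 0 ↔ _
  rw [show p * ((1 + xR n) * PmR n d) + q * (1 + xR n) = (1 + xR n) * (q + p * PmR n d) by ring]

lemma mem_C2set_iff : (p, q) ∈ C2set n (1 + xR n) ((1 + xR n) * PmR n d) ↔
    q + p * PmR n d = 0 ∧ augmentation n p = 0 := by
  rw [augmentation_eq_zero_iff, ← ZModModule.sub_eq_add q, sub_eq_zero]
  constructor
  · rintro ⟨r, hr⟩
    obtain ⟨rfl, rfl⟩ := Prod.mk.inj hr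
    exact ⟨by ring, dvd_mul_left _ _⟩
  · rintro ⟨rfl, r, rfl⟩
    exact ⟨r, by ring_nf⟩

end Codes

section WindowBound

variable {n : ℕ}

lemma sum_xR_pow_mul_add_window {d k l m s : ℕ} {c : ZMod 2} {p q : R2 n}
    (hpq : q + p * PmR n d = c • PmR n n)
    (hs : PmR n (d * m) + xR n ^ s * PmR n l = (k : ZMod 2) • PmR n n) :
    (∑ i ∈ Finset.range m, xR n ^ (d * i)) * q + xR n ^ s * PmR n l * p =
      (m * c + k * augmentation n p) • PmR n n := by
  set shifts := ∑ i ∈ Finset.range m, xR n ^ (d * i) with shifts_def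
  have augmentation_shifts : augmentation n shifts = m := by
    simp [shifts_def, augmentation_xR]
  calc shifts * q + xR n ^ s * PmR n l * p
      = shifts * (q + p * PmR n d) + (PmR n (d * m) + xR n ^ s * PmR n l) * p := by
        rw [PmR_mul]
        linear_combination -ZModModule.add_self (shifts * p * PmR n d)
    _ = c • (shifts * PmR n n) + (k : ZMod 2) • (p * PmR n n) := by
        rw [hpq, hs, mul_smul_comm, smul_mul_assoc, mul_comm (PmR n n)]
    _ = (m * c + k * augmentation n p) • PmR n n := by
        rw [mul_PmR_self, mul_PmR_self, augmentation_shifts, smul_smul, smul_smul, ← add_smul,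
          mul_comm c]

variable [NeZero n]

lemma le_of_mul_add_window_eq_PmR_self {l m s : ℕ} {a j u v : R2 n} (ha : wt a ≤ m)
    (h : a * v + xR n ^ s * PmR n l * (u + j * (1 + xR n)) = PmR n n) :
    n ≤ m * wt v + l * wt u + 2 * wt j := by
  have wt_window : wt (xR n ^ s * PmR n l) ≤ l := by
    simpa only [PmR, Finset.mul_sum, ← pow_add, Finset.card_range]
      using wt_sum_xR_pow_le (Finset.range l) fun i ↦ s + i
  have wt_endpoints : wt (xR n ^ s + xR n ^ (s + l)) ≤ 2 :=
    (wt_add_le _ _).trans (Nat.add_le_add (wt_xR_pow_le_one s) (wt_xR_pow_le_one (s + l)))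
  calc n = wt (PmR n n) := wt_PmR_self.symm
    _ = wt (a * v + xR n ^ s * PmR n l * u + (xR n ^ s + xR n ^ (s + l)) * j) := by
        rw [← h]
        congr 1
        linear_combination xR n ^ s * j * one_add_xR_mul_PmR (n := n) l
    _ ≤ wt (a * v) + wt (xR n ^ s * PmR n l * u) + wt ((xR n ^ s + xR n ^ (s + l)) * j) :=
        (wt_add_le _ _).trans (Nat.add_le_add_right (wt_add_le _ _) _)
    _ ≤ m * wt v + l * wt u + 2 * wt j := by
        gcongr
        exacts [wt_mul_le_of_wt_le ha v, wt_mul_le_of_wt_le wt_window u,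
          wt_mul_le_of_wt_le wt_endpoints j]

lemma window_weight_bound {d k l m : ℕ} {c : ZMod 2} {j u v : R2 n}
    (hv : v + (u + j * (1 + xR n)) * PmR n d = c • PmR n n)
    (hdm : d * m + l = k * n ∨ d * m = k * n + l)
    (hone : m * c + k * augmentation n (u + j * (1 + xR n)) = 1) :
    n ≤ m * wt v + l * wt u + 2 * wt j := by
  obtain ⟨s, hs⟩ := exists_PmR_add_xR_pow_mul_PmR hdm
  have all_ones := sum_xR_pow_mul_add_window hv hs
  rw [hone, one_smul] at all_ones
  have wt_shifts : wt (∑ i ∈ Finset.range m, xR n ^ (d * i)) ≤ m := by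
    simpa only [Finset.card_range] using wt_sum_xR_pow_le (Finset.range m) fun i ↦ d * i
  exact le_of_mul_add_window_eq_PmR_self wt_shifts all_ones

end WindowBound

section Arithmetic

variable {d f n x y z : ℕ}

lemma le_add_add_of_mul_le (hn : 2 * n = d ^ 2 + 1) (h : d * n ≤ n * (x + y) + 2 * d * z) :
    d ≤ z + y + x := by
  by_contra! hlt
  have four_mul_le : 4 * z ≤ (z + 1) * d :=
    calc 4 * z ≤ (z + 1) ^ 2 := by simpa using four_mul_le_sq_add z 1
      _ = (z + 1) * (z + 1) := sq _
      _ ≤ (z + 1) * d := by gcongr; omega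
  have weighted : 2 * n * (z + 1) ≤ 4 * z * d := by
    have := Nat.mul_le_mul_left (2 * n) (Nat.succ_le_of_lt hlt)
    linarith
  have := Nat.mul_le_mul_right d four_mul_le
  rw [hn] at weighted
  linarith

lemma le_of_balanced_bounds (hn : 2 * n = (2 * f + 1) ^ 2 + 1)
    (h₁ : n ≤ f * x + (f + 1) * y + 2 * z) (h₂ : n ≤ (f + 1) * x + f * y + 2 * z) :
    2 * f + 1 ≤ z + y + x := by
  refine le_add_add_of_mul_le hn (Nat.le_of_mul_le_mul_left ?_ two_pos)
  calc 2 * ((2 * f + 1) * n) = (2 * f + 1) * (n + n) := by ring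
    _ ≤ (2 * f + 1) *
          ((f * x + (f + 1) * y + 2 * z) + ((f + 1) * x + f * y + 2 * z)) := by gcongr
    _ = (2 * f + 1) ^ 2 * (x + y) + 4 * (2 * f + 1) * z := by ring
    _ ≤ ((2 * f + 1) ^ 2 + 1) * (x + y) + 4 * (2 * f + 1) * z := by gcongr; omega
    _ = 2 * (n * (x + y) + 2 * (2 * f + 1) * z) := by rw [← hn]; ring

lemma le_of_skew_bounds (hn : 2 * n = (2 * f + 1) ^ 2 + 1)
    (h₁ : n ≤ f * x + (f + 1) * y + 2 * z) (h₂ : n ≤ (2 * f + 1) * x + y + 2 * z) :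
    2 * f + 1 ≤ z + y + x := by
  have hnf : n = 2 * f ^ 2 + 2 * f + 1 := by linarith
  apply le_add_add_of_mul_le hn
  calc (2 * f + 1) * n = 2 * f * n + n := by ring
    _ ≤ 2 * f * (f * x + (f + 1) * y + 2 * z) + ((2 * f + 1) * x + y + 2 * z) := by gcongr
    _ = n * (x + y) + 2 * (2 * f + 1) * z := by
        rw [hnf]
        ring

end Arithmetic

/-- For the `[[d²+1, 2, d]]` GB code (`d ≥ 3` odd, `2n = d²+1`,
`a = 1+x`, `b = (1+x)·P_d(x)`): for all `j, u, v ∈ R`, if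
`(u + j·(1+x), v) ∈ C₁(a,b) \ C₂(a,b)` then `wt(j) + wt(u) + wt(v) ≥ d`.
(Hence under the RL syndrome-extraction pattern the effective distance equals `d`.) -/
theorem stmt_11 (d n : ℕ) (hd : Odd d) (hd3 : 3 ≤ d) (hn : 2 * n = d ^ 2 + 1)
    (a b : R2 n) (ha : a = 1 + xR n) (hb : b = (1 + xR n) * PmR n d) :
    ∀ j u v : R2 n, (u + j * (1 + xR n), v) ∈ C1set n a b \ C2set n a b →
      d ≤ wt j + wt u + wt v := by
  rintro j u v ⟨hC1, hC2⟩
  subst ha hb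
  obtain ⟨f, rfl⟩ := hd
  have : NeZero n := ⟨by omega⟩
  have eq_zero_or_one : ∀ e : ZMod 2, e = 0 ∨ e = 1 := by decide
  obtain ⟨c, hc⟩ := mem_C1set_iff.1 hC1
  have bound_f := window_weight_bound (m := f) (l := f + 1) (k := 1) hc (.inl (by linarith))
  have bound_f_succ := window_weight_bound (m := f + 1) (l := f) (k := 1) hc (.inr (by linarith))
  have bound_one := window_weight_bound (m := 1) (l := 2 * f + 1) (k := 0) hc (.inr (by ring))
  have bound_d := window_weight_bound (m := 2 * f + 1) (l := 1) (k := 2) hc (.inl (by linarith))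
  set e := augmentation n (u + j * (1 + xR n))
  push_cast [one_mul, zero_mul, add_zero] at bound_f bound_f_succ bound_one bound_d
  obtain rfl | rfl := eq_zero_or_one c
  · have he_one : e = 1 := (eq_zero_or_one e).resolve_left fun he_zero ↦
      hC2 (mem_C2set_iff.2 ⟨hc.trans (zero_smul _ _), he_zero⟩)
    exact le_of_balanced_bounds hn (bound_f (by simp [he_one])) (bound_f_succ (by simp [he_one]))
  · obtain hfe | hfe := eq_zero_or_one (f + e)
    · rw [add_right_comm]
      exact le_of_skew_bounds hn (by linarith [bound_f_succ (by linear_combination hfe)])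
        (by linarith [bound_one rfl])
    · exact le_of_skew_bounds hn (bound_f (by linear_combination hfe))
        (bound_d (by linear_combination (f + e) * CharTwo.two_eq_zero (R := ZMod 2)))

end
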